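/- Let (N, (A_i)_{i∈N}, (u_i)_{i∈N}) be a finite simultaneous-move game and let p = (p_i)_{i∈N} be a marginal strategy profile that is NOT a Nash equilibrium. Then there exist a fee function f : ∏_i A_i → ℝ and stochastic kernels η_i : A_i → Δ(A_i) such that (1) for every action profile a ∈ ∏_i A_i, Σ_{i∈N} u_i(a) ≤ Σ_{i∈N} Σ_{a_i'∈A_i} η_i(a_i, a_i') u_i(a_i', a_{-i}) − f(a), and (2) Σ_{a∈∏_i A_i} (∏_{i∈N} p_i(a_i)) f(a) > 0. -/

import Mathlib

open Finset

variable {N : Type*} [Fintype N] [Nonempty N] [DecidableEq N]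
  {A : N → Type*} [∀ i, Fintype (A i)] [∀ i, Nonempty (A i)] [∀ i, DecidableEq (A i)]

/-- `p` is a marginal strategy profile: each `p i` is a probability distribution on `A i`. -/
def IsMarginalProfile (p : ∀ i, A i → ℝ) : Prop :=
  (∀ i (b : A i), 0 ≤ p i b) ∧ ∀ i, ∑ b : A i, p i b = 1

/-- `q` is a correlated equilibrium of the game with utilities `u`. -/
def IsCorrelatedEq (u : ∀ i : N, (∀ j, A j) → ℝ) (q : (∀ j, A j) → ℝ) : Prop :=
  (∀ a, 0 ≤ q a) ∧ (∑ a : ∀ j, A j, q a = 1) ∧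
    ∀ (i : N) (b b' : A i),
      0 ≤ ∑ a : ∀ j, A j,
            (if a i = b then q a * (u i a - u i (Function.update a i b')) else 0)

/-- The marginal of the joint distribution `q` on `A i`. -/
def marg (q : (∀ j, A j) → ℝ) (i : N) (b : A i) : ℝ :=
  ∑ a : ∀ j, A j, if a i = b then q a else 0

/-- Each row `η i b` is a probability distribution on `A i` (a stochastic kernel). -/
def IsKernel (η : ∀ i, A i → A i → ℝ) : Prop :=
  ∀ i (b : A i), (∀ b' : A i, 0 ≤ η i b b') ∧ ∑ b' : A i, η i b b' = 1

/-- `p` is a Nash equilibrium of the game with utilities `u`. -/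
def IsNashEq (u : ∀ i : N, (∀ j, A j) → ℝ) (p : ∀ i, A i → ℝ) : Prop :=
  ∀ (i : N) (b b' : A i), 0 < p i b →
    0 ≤ ∑ a : ∀ j, A j,
          (if a i = b then
            (∏ j ∈ Finset.univ.erase i, p j (a j)) * (u i a - u i (Function.update a i b'))
          else 0)

/-!
The largest fee that the players can be charged when they follow kernels `η` is their total gain
over staying put. If player `i` gains by replacing `b` with `b'`, let `η` make this replacement and
otherwise leave every action alone. The gain is then supported on the profiles with `a i = b`, and
its expectation under the product of `p` is the violated equilibrium inequality scaled by `p i b`,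
with its sign reversed.
-/

section Deviations

omit [Nonempty N] [∀ i, Nonempty (A i)]

/-- The kernel profile of a deterministic deviation: from action `x`, player `i` plays `σ i x` with
probability one. -/
def pureKernel (σ : ∀ i, A i → A i) : ∀ i, A i → A i → ℝ :=
  fun i x => Pi.single (σ i x) 1

/-- The deterministic deviation in which player `i` replaces action `b` by `b'`; all other actions
of `i`, and all actions of the other players, are unchanged. -/
def switchAction (i : N) (b b' : A i) : ∀ j, A j → A j :=
  Function.update (fun _ => id) i (Function.update id b b')

/-- The sum over the players of the expected gain at `a` from unilaterally resampling their own
action from `η`. It serves as the fee charged at `a`. -/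
def deviationGain (u : N → (∀ j, A j) → ℝ) (η : ∀ i, A i → A i → ℝ) (a : ∀ j, A j) : ℝ :=
  (∑ i, ∑ b', η i (a i) b' * u i (Function.update a i b')) - ∑ i, u i a

omit [Fintype N] [DecidableEq N] in
theorem isKernel_pureKernel (σ : ∀ i, A i → A i) : IsKernel (pureKernel σ) := by
  intro i x
  have nonneg : 0 ≤ pureKernel σ i x := Pi.single_nonneg.2 zero_le_one
  exact ⟨nonneg, Fintype.sum_pi_single' (σ i x) 1⟩

theorem deviationGain_pureKernel (u : N → (∀ j, A j) → ℝ) (σ : ∀ i, A i → A i)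
    (a : ∀ j, A j) :
    deviationGain u (pureKernel σ) a =
      ∑ i, (u i (Function.update a i (σ i (a i))) - u i a) := by
  rw [deviationGain, sum_sub_distrib]
  congr! 2 with i
  exact single_one_dotProduct (σ i (a i)) fun x => u i (Function.update a i x)

theorem deviationGain_pureKernel_switchAction (u : N → (∀ j, A j) → ℝ) (i : N)
    (b b' : A i) (a : ∀ j, A j) :
    deviationGain u (pureKernel (switchAction i b b')) a =
      if a i = b then u i (Function.update a i b') - u i a else 0 := by
  rw [deviationGain_pureKernel, Fintype.sum_eq_single i]
  · by_cases hab : a i = b <;> simp [switchAction, hab]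
  · intro j hj
    simp [switchAction, hj]

theorem sum_prod_mul_deviationGain_pureKernel_switchAction (u : N → (∀ j, A j) → ℝ)
    (p : ∀ i, A i → ℝ) (i : N) (b b' : A i) :
    ∑ a : ∀ j, A j,
        (∏ j, p j (a j)) * deviationGain u (pureKernel (switchAction i b b')) a =
      -(p i b * ∑ a : ∀ j, A j,
        if a i = b then
          (∏ j ∈ univ.erase i, p j (a j)) * (u i a - u i (Function.update a i b'))
        else 0) := by
  rw [mul_sum, ← sum_neg_distrib]
  refine sum_congr rfl fun a _ => ?_
  rw [deviationGain_pureKernel_switchAction]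
  split_ifs with hab
  · rw [← mul_prod_erase univ (fun j => p j (a j)) (mem_univ i), hab]
    ring
  · simp

end Deviations

theorem not_nash_implies_exploitable_profilewise
    (u : ∀ i : N, (∀ j, A j) → ℝ) (p : ∀ i, A i → ℝ) (hp : IsMarginalProfile p)
    (hN : ¬ IsNashEq u p) :
    ∃ (f : (∀ j, A j) → ℝ) (η : ∀ i, A i → A i → ℝ),
      IsKernel η ∧
      (∀ a : ∀ j, A j,
        ∑ i, u i a ≤
          (∑ i, ∑ b' : A i, η i (a i) b' * u i (Function.update a i b')) - f a) ∧
      0 < ∑ a : ∀ j, A j, (∏ i, p i (a i)) * f a := by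
  simp only [IsNashEq, not_forall, not_le, exists_prop] at hN
  obtain ⟨i, b, b', hb, hloss⟩ := hN
  let η := pureKernel (switchAction i b b')
  have budget (a : ∀ j, A j) : ∑ i, u i a ≤
      (∑ i, ∑ x, η i (a i) x * u i (Function.update a i x)) - deviationGain u η a :=
    (sub_sub_cancel _ _).ge
  refine ⟨deviationGain u η, η, isKernel_pureKernel _, budget, ?_⟩
  rw [sum_prod_mul_deviationGain_pureKernel_switchAction]
  exact neg_pos.2 (mul_neg_of_pos_of_neg hb hloss)
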